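/- (Algebraic core of Yano's theorem.) Let V be a 2n-dimensional real inner product space with compatible complex structure J, and let R be a (1,3)-tensor on V such that R = E_Q for SOME J-invariant symmetric bilinear form Q on V. Define ρ(Y,Z) := Σ_i g(R(e_i,Y)Z, e_i) for an orthonormal basis (e_i) and τ := Σ_i ρ(e_i,e_i). Then necessarily Q(Y,Z) = ρ(Y,Z)/(2(n+2)) − τ g(Y,Z)/(8(n+1)(n+2)) for all Y, Z; consequently the Bochner tensor of R, defined as B(R) := R − E_{Q₀} with Q₀ := ρ/(2(n+2)) − (τ/(8(n+1)(n+2))) g, vanishes identically. -/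

import Mathlib

open RealInnerProductSpace

/-!
Write `A` for `Q̂` and let `(eᵢ)` be an orthonormal basis of `V`. In the contraction
`∑ ⟪E_Q(eᵢ, Y)Z, eᵢ⟫` two terms give `2n Q` and `(tr A) g`. The term containing `⟪J eᵢ, eᵢ⟫`
vanishes since `J` is skew, and the one containing `⟪J A eᵢ, eᵢ⟫` sums to a multiple of
`tr (J A) = 0` since moreover `A` is symmetric. The remaining sums have the form
`∑ ⟪T eᵢ, w⟫ ⟪v, eᵢ⟫ = ⟪T v, w⟫` and add up to `4 Q`. Hence `ρ = (2n + 4) Q + (tr A) g`, so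
`τ = 4 (n + 1) tr A`, and these two equations determine `Q` from `ρ` and `τ`.
-/

section Bochner

variable {V : Type*} [NormedAddCommGroup V] [InnerProductSpace ℝ V]

/-- The curvature-like tensor `E_q(X, Y)Z` attached to a form `q` and an almost complex structure
`J`. The endomorphism `A` representing `q` through the inner product is a separate argument. -/
def eTensor (J : V →ₗ[ℝ] V) (q : V → V → ℝ) (A : V →ₗ[ℝ] V) (X Y Z : V) : V :=
  q Y Z • X - q X Z • Y + ⟪Y, Z⟫ • A X - ⟪X, Z⟫ • A Y
    + q (J Y) Z • J X - q (J X) Z • J Y - (2 * q (J X) Y) • J Z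
    + ⟪J Y, Z⟫ • J (A X) - ⟪J X, Z⟫ • J (A Y)
    - (2 * ⟪J X, Y⟫) • J (A Z)

/-- The Ricci contraction `ρ(Y, Z) = ∑ ⟪R(eᵢ, Y)Z, eᵢ⟫` in the orthonormal basis `e`. The tensor
`R` is a bare function, so independence of the basis is not built in. -/
noncomputable def ricciContraction {ι : Type*} [Fintype ι] (e : OrthonormalBasis ι ℝ V)
    (R : V → V → V → V) (Y Z : V) : ℝ :=
  ∑ i, ⟪R (e i) Y Z, e i⟫

/-- The scalar trace `τ = ∑ ρ(eᵢ, eᵢ)` of the Ricci contraction. -/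
noncomputable def scalarTrace {ι : Type*} [Fintype ι] (e : OrthonormalBasis ι ℝ V)
    (R : V → V → V → V) : ℝ :=
  ∑ i, ricciContraction e R (e i) (e i)

/-- The form `Q₀ = ρ / (2(n+2)) - τ g / (8(n+1)(n+2))` such that `R - E_{Q₀}` is the Bochner tensor
of `R` in dimension `2n`. -/
noncomputable def bochnerForm {ι : Type*} [Fintype ι] (n : ℕ) (e : OrthonormalBasis ι ℝ V)
    (R : V → V → V → V) (Y Z : V) : ℝ :=
  ricciContraction e R Y Z / (2 * ((n : ℝ) + 2))
    - scalarTrace e R * ⟪Y, Z⟫ / (8 * ((n : ℝ) + 1) * ((n : ℝ) + 2))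

lemma inner_map_left_eq_neg_of_isometry_of_sq_eq_neg {J : V → V}
    (hJiso : ∀ X Y, ⟪J X, J Y⟫ = ⟪X, Y⟫) (hJJ : ∀ X, J (J X) = -X) (X Y : V) :
    ⟪J X, Y⟫ = -⟪X, J Y⟫ := by
  rw [← hJiso X (J Y), hJJ, inner_neg_right, neg_neg]

lemma inner_map_self_eq_zero_of_skew {J : V → V} (hJ : ∀ X Y, ⟪J X, Y⟫ = -⟪X, J Y⟫) (X : V) :
    ⟪J X, X⟫ = 0 :=
  self_eq_neg.mp ((hJ X X).trans (congrArg _ (real_inner_comm _ _)))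

lemma trace_comp_eq_zero_of_skew_of_isSymmetric [FiniteDimensional ℝ V] {J A : V →ₗ[ℝ] V}
    (hJ : ∀ X Y, ⟪J X, Y⟫ = -⟪X, J Y⟫) (hA : A.IsSymmetric) :
    LinearMap.trace ℝ V (J ∘ₗ A) = 0 := by
  let e := stdOrthonormalBasis ℝ V
  have inner_comp_swap (X : V) : ⟪X, (J ∘ₗ A) X⟫ = -⟪X, (A ∘ₗ J) X⟫ := by
    rw [LinearMap.comp_apply, LinearMap.comp_apply, ← hA, ← neg_eq_iff_eq_neg, ← hJ,
      real_inner_comm]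
  refine self_eq_neg.mp ?_
  calc LinearMap.trace ℝ V (J ∘ₗ A)
      = -LinearMap.trace ℝ V (A ∘ₗ J) := by
        simp only [LinearMap.trace_eq_sum_inner _ e, inner_comp_swap, Finset.sum_neg_distrib]
    _ = -LinearMap.trace ℝ V (J ∘ₗ A) := by rw [LinearMap.trace_comp_comm']

lemma sum_inner_map_mul_inner {W ι : Type*} [NormedAddCommGroup W] [InnerProductSpace ℝ W]
    [Fintype ι] (e : OrthonormalBasis ι ℝ V) (T : V →ₗ[ℝ] W) (v : V) (w : W) :
    ∑ i, ⟪T (e i), w⟫ * ⟪v, e i⟫ = ⟪T v, w⟫ := by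
  conv_rhs => rw [← e.sum_repr' v]
  simp only [map_sum, map_smul, sum_inner, real_inner_smul_left, real_inner_comm v, mul_comm]

variable {J A : V →ₗ[ℝ] V} {q : V → V → ℝ}

lemma inner_eTensor_self (hJ : ∀ X, ⟪J X, X⟫ = 0) (hA : ∀ X Y, ⟪A X, Y⟫ = q X Y) (X Y Z : V) :
    ⟪eTensor J q A X Y Z, X⟫ =
      q Y Z * ⟪X, X⟫ + ⟪Y, Z⟫ * ⟪X, A X⟫ + ⟪J Y, Z⟫ * ⟪X, J (A X)⟫
        - ⟪A X, Z⟫ * ⟪Y, X⟫ - ⟪X, Z⟫ * ⟪A Y, X⟫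
        - ⟪A (J X), Z⟫ * ⟪J Y, X⟫ - 2 * (⟪A (J X), Y⟫ * ⟪J Z, X⟫)
        - ⟪J X, Z⟫ * ⟪J (A Y), X⟫ - 2 * (⟪J X, Y⟫ * ⟪J (A Z), X⟫) := by
  simp only [eTensor, inner_add_left, inner_sub_left, real_inner_smul_left, hJ, ← hA,
    real_inner_comm (A X) X, real_inner_comm (J (A X)) X]
  ring

lemma ricciContraction_eTensor {ι : Type*} [Fintype ι] (e : OrthonormalBasis ι ℝ V)
    (hJiso : ∀ X Y, ⟪J X, J Y⟫ = ⟪X, Y⟫) (hJJ : ∀ X, J (J X) = -X)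
    (hq : ∀ X Y, q X Y = q Y X) (hA : ∀ X Y, ⟪A X, Y⟫ = q X Y) (Y Z : V) :
    ricciContraction e (eTensor J q A) Y Z =
      (Fintype.card ι + 4) * q Y Z + LinearMap.trace ℝ V A * ⟪Y, Z⟫ := by
  have : FiniteDimensional ℝ V := e.toBasis.finiteDimensional_of_finite
  have hJ := inner_map_left_eq_neg_of_isometry_of_sq_eq_neg hJiso hJJ
  have hAsymm : A.IsSymmetric := fun X Y => by rw [hA, hq, ← hA, real_inner_comm]
  have sum_inner_JA : ∑ i, ⟪e i, J (A (e i))⟫ = 0 :=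
    (LinearMap.trace_eq_sum_inner (J ∘ₗ A) e).symm.trans
      (trace_comp_eq_zero_of_skew_of_isSymmetric hJ hAsymm)
  have sum_id (v w : V) : ∑ i, ⟪e i, w⟫ * ⟪v, e i⟫ = ⟪v, w⟫ :=
    sum_inner_map_mul_inner e LinearMap.id v w
  have sum_AJ (v w : V) : ∑ i, ⟪A (J (e i)), w⟫ * ⟪v, e i⟫ = ⟪A (J v), w⟫ :=
    sum_inner_map_mul_inner e (A ∘ₗ J) v w
  simp only [ricciContraction, inner_eTensor_self (inner_map_self_eq_zero_of_skew hJ) hA,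
    Finset.sum_add_distrib, Finset.sum_sub_distrib, ← Finset.mul_sum, sum_inner_JA, sum_id, sum_AJ,
    sum_inner_map_mul_inner, ← LinearMap.trace_eq_sum_inner, e.inner_eq_one, Finset.sum_const,
    Finset.card_univ, nsmul_eq_mul]
  simp only [hJJ, map_neg, inner_neg_left, hA, hq Z Y]
  ring

lemma scalarTrace_eTensor {ι : Type*} [Fintype ι] (e : OrthonormalBasis ι ℝ V)
    (hJiso : ∀ X Y, ⟪J X, J Y⟫ = ⟪X, Y⟫) (hJJ : ∀ X, J (J X) = -X)
    (hq : ∀ X Y, q X Y = q Y X) (hA : ∀ X Y, ⟪A X, Y⟫ = q X Y) :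
    scalarTrace e (eTensor J q A) = (2 * Fintype.card ι + 4) * LinearMap.trace ℝ V A := by
  simp only [scalarTrace, ricciContraction_eTensor e hJiso hJJ hq hA, ← hA, real_inner_comm,
    Finset.sum_add_distrib, ← Finset.mul_sum, ← LinearMap.trace_eq_sum_inner, e.inner_eq_one,
    Finset.sum_const, Finset.card_univ, nsmul_eq_mul]
  ring

lemma bochnerForm_eTensor {n : ℕ} {ι : Type*} [Fintype ι]
    (hcard : Fintype.card ι = 2 * n) (e : OrthonormalBasis ι ℝ V)
    (hJiso : ∀ X Y, ⟪J X, J Y⟫ = ⟪X, Y⟫) (hJJ : ∀ X, J (J X) = -X)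
    (hq : ∀ X Y, q X Y = q Y X) (hA : ∀ X Y, ⟪A X, Y⟫ = q X Y)
    (Y Z : V) :
    bochnerForm n e (eTensor J q A) Y Z = q Y Z := by
  rw [bochnerForm, ricciContraction_eTensor e hJiso hJJ hq hA,
    scalarTrace_eTensor e hJiso hJJ hq hA, hcard]
  push_cast
  field_simp
  ring

theorem bochner_vanishes_of_eq_eQ_general {n : ℕ} {ι : Type*} [Fintype ι]
    (hcard : Fintype.card ι = 2 * n) (e : OrthonormalBasis ι ℝ V)
    (hJiso : ∀ X Y, ⟪J X, J Y⟫ = ⟪X, Y⟫) (hJJ : ∀ X, J (J X) = -X)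
    (hq : ∀ X Y, q X Y = q Y X) (hA : ∀ X Y, ⟪A X, Y⟫ = q X Y)
    {R : V → V → V → V} (hR : ∀ X Y Z, R X Y Z = eTensor J q A X Y Z) :
    (∀ Y Z, q Y Z = bochnerForm n e R Y Z) ∧
      ∀ (q₀ : V → V → ℝ) (A₀ : V →ₗ[ℝ] V),
        (∀ Y Z, q₀ Y Z = bochnerForm n e R Y Z) → (∀ X Y, ⟪A₀ X, Y⟫ = q₀ X Y) →
          ∀ X Y Z, R X Y Z - eTensor J q₀ A₀ X Y Z = 0 := by
  obtain rfl : R = eTensor J q A := by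
    funext X Y Z
    exact hR X Y Z
  have form_eq := bochnerForm_eTensor hcard e hJiso hJJ hq hA
  refine ⟨fun Y Z => (form_eq Y Z).symm, fun q₀ A₀ hq₀ hA₀ X Y Z => ?_⟩
  obtain rfl : q₀ = q := by
    funext Y Z
    rw [hq₀, form_eq]
  obtain rfl : A₀ = A := LinearMap.ext fun X => ext_inner_right ℝ fun Y => by rw [hA₀, hA]
  exact sub_self _

end Bochner

/-- (Algebraic core of Yano's theorem.) If `R = E_Q` for some `J`-invariant
symmetric bilinear form `Q`, then `Q = ρ/(2(n+2)) − τ g/(8(n+1)(n+2))` where `ρ`, `τ` are the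
Ricci contraction and scalar trace of `R`; consequently the Bochner tensor
`B(R) = R − E_{Q₀}` vanishes identically. -/
theorem bochner_vanishes_of_eq_eQ
    (n : ℕ) (hn : 1 ≤ n)
    {V : Type*} [NormedAddCommGroup V] [InnerProductSpace ℝ V] [FiniteDimensional ℝ V]
    (hdim : Module.finrank ℝ V = 2 * n)
    (J : V →ₗ[ℝ] V)
    (hJiso : ∀ X Y : V, ⟪J X, J Y⟫ = ⟪X, Y⟫)
    (hJJ : ∀ X : V, J (J X) = -X)
    (R : V → V → V → V)
    (Q : V →ₗ[ℝ] V →ₗ[ℝ] ℝ)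
    (hQsymm : ∀ X Y : V, Q X Y = Q Y X)
    (hQJ : ∀ X Y : V, Q (J X) (J Y) = Q X Y)
    (Qhat : V →ₗ[ℝ] V)
    (hQhat : ∀ X Y : V, ⟪Qhat X, Y⟫ = Q X Y)
    (hR : ∀ X Y Z : V, R X Y Z =
      Q Y Z • X - Q X Z • Y + ⟪Y, Z⟫ • Qhat X - ⟪X, Z⟫ • Qhat Y
        + Q (J Y) Z • J X - Q (J X) Z • J Y - (2 * Q (J X) Y) • J Z
        + ⟪J Y, Z⟫ • J (Qhat X) - ⟪J X, Z⟫ • J (Qhat Y)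
        - (2 * ⟪J X, Y⟫) • J (Qhat Z))
    (e : OrthonormalBasis (Fin (2 * n)) ℝ V)
    (ρ : V → V → ℝ)
    (hρ : ∀ Y Z : V, ρ Y Z = ∑ i, ⟪R (e i) Y Z, e i⟫)
    (τ : ℝ)
    (hτ : τ = ∑ i, ρ (e i) (e i)) :
    (∀ Y Z : V, Q Y Z =
        ρ Y Z / (2 * ((n : ℝ) + 2)) - τ * ⟪Y, Z⟫ / (8 * ((n : ℝ) + 1) * ((n : ℝ) + 2)))
    ∧ (∀ (Q₀ : V → V → ℝ) (Q₀hat : V →ₗ[ℝ] V),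
        (∀ Y Z : V, Q₀ Y Z =
          ρ Y Z / (2 * ((n : ℝ) + 2)) - τ * ⟪Y, Z⟫ / (8 * ((n : ℝ) + 1) * ((n : ℝ) + 2))) →
        (∀ X Y : V, ⟪Q₀hat X, Y⟫ = Q₀ X Y) →
        ∀ X Y Z : V,
          R X Y Z -
            (Q₀ Y Z • X - Q₀ X Z • Y + ⟪Y, Z⟫ • Q₀hat X - ⟪X, Z⟫ • Q₀hat Y
              + Q₀ (J Y) Z • J X - Q₀ (J X) Z • J Y - (2 * Q₀ (J X) Y) • J Z
              + ⟪J Y, Z⟫ • J (Q₀hat X) - ⟪J X, Z⟫ • J (Q₀hat Y)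
              - (2 * ⟪J X, Y⟫) • J (Q₀hat Z)) = 0) := by
  obtain rfl : ρ = ricciContraction e R := funext₂ hρ
  subst hτ
  exact bochner_vanishes_of_eq_eQ_general (Fintype.card_fin _) e hJiso hJJ hQsymm hQhat hR
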